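/- Let D be a finite oriented graph with vertex set {1, …, a}, let k and ℓ be positive integers, fix ε with 0 < ε < 1/(4ℓ), and set p = n^{ε−1}. For all sufficiently large n, the expected number of pairs of directed cycles of length less than ℓ in a random oriented graph D̂ drawn from 𝒟(n, p) which intersect in at least one vertex is at most n^{−1/2}. -/

import Mathlib

open MeasureTheory

/-- An oriented graph on vertex type `V`: a loopless digraph in which for every pair of
vertices at most one of the two opposite arcs is present, encoded as an irreflexive,
asymmetric adjacency relation. -/
structure OrientedGraph (V : Type) where
  Adj : V → V → Prop
  irrefl : ∀ v, ¬ Adj v v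
  asymm : ∀ u v, Adj u v → ¬ Adj v u

/-- The vertex set `V₁ ∪ ⋯ ∪ V_a` of the blown-up graph `D₀`, where
`V_i = {i} × Fin n` has size `n`. -/
abbrev Vtx (a n : ℕ) : Type := Fin a × Fin n

/-- The part `V_i` of the vertex set of `D₀`. -/
def cellV (a n : ℕ) (i : Fin a) : Set (Vtx a n) := {x | x.1 = i}

/-- A sample point: for each potential arc of `D₀`, whether it is included. -/
abbrev Omega (a n : ℕ) : Type := Vtx a n × Vtx a n → Bool

/-- The Bernoulli measure on `Bool` with success probability `p`. -/
noncomputable def bernoulliBool (p : ℝ) : Measure Bool :=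
  ENNReal.ofReal p • Measure.dirac true + ENNReal.ofReal (1 - p) • Measure.dirac false

/-- The random oriented graph model `𝒟(n, p)`: each potential arc of `D₀` is included
independently with probability `p` (product of Bernoulli measures). -/
noncomputable def model (a n : ℕ) (p : ℝ) : Measure (Omega a n) :=
  Measure.pi fun _ : Vtx a n × Vtx a n => bernoulliBool p

/-- The random spanning subgraph `D̂` of `D₀` determined by the sample point `ω`: the arc
`x → y` is present iff `x ∈ V_i`, `y ∈ V_j` for an arc `i → j` of `D` and `ω` selects the
pair `(x, y)`. -/
def Dhat {a : ℕ} (D : OrientedGraph (Fin a)) (n : ℕ) (ω : Omega a n) :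
    OrientedGraph (Vtx a n) where
  Adj x y := D.Adj x.1 y.1 ∧ ω (x, y) = true
  irrefl x h := D.irrefl x.1 h.1
  asymm x y h h' := D.asymm x.1 y.1 h.1 h'.1

/-- `S` is the arc set of a directed cycle of length `m` in `G`; directed cycles are
counted up to cyclic rotation, and a directed cycle is uniquely determined (up to
rotation) by its arc set. -/
def IsCycleArcSet {V : Type} (G : OrientedGraph V) (m : ℕ) (S : Set (V × V)) : Prop :=
  ∃ c : ZMod m → V, Function.Injective c ∧ (∀ i, G.Adj (c i) (c (i + 1))) ∧
    S = Set.range fun i => (c i, c (i + 1))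

/-- `S` is the arc set of a directed cycle of length less than `ℓ` in `G`. -/
def IsShortCycleArcSet {V : Type} (G : OrientedGraph V) (ℓ : ℕ) (S : Set (V × V)) : Prop :=
  ∃ m : ℕ, 0 < m ∧ m < ℓ ∧ IsCycleArcSet G m S

/-- The number of directed cycles of length less than `ℓ` in `G`, counted up to cyclic
rotation (i.e. the number of their arc sets). -/
noncomputable def numShortCycles {V : Type} (G : OrientedGraph V) (ℓ : ℕ) : ℕ :=
  Nat.card {S : Set (V × V) // IsShortCycleArcSet G ℓ S}

/-- The vertex `x` lies on the (cycle with) arc set `S`. -/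
def OnArcSet {V : Type} (S : Set (V × V)) (x : V) : Prop :=
  ∃ y, (x, y) ∈ S ∨ (y, x) ∈ S

/-- The number of (unordered) pairs of distinct directed cycles of length less than `ℓ`
in `G` which intersect in at least one vertex, each cycle represented by its arc set. -/
noncomputable def numIntersectingShortCyclePairs {V : Type} (G : OrientedGraph V)
    (ℓ : ℕ) : ℕ :=
  Nat.card {P : Finset (Set (V × V)) // P.card = 2 ∧
    (∀ S ∈ P, IsShortCycleArcSet G ℓ S) ∧ ∃ x : V, ∀ S ∈ P, OnArcSet S x}

/-!
First moment method. Two distinct directed cycles which share a vertex span a subdigraph with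
more arcs than vertices: every vertex of the union is the tail of some arc, and if it were the
tail of only one then both cycles would be traced out by the same successor function, starting
at the common vertex. A union on `v` vertices thus survives with probability at most `p ^ (v + 1)`.
There are `O(N ^ v)` such pairs among `N` vertices and `v < 2ℓ`, so the expectation is
`O(p * ∑ v < 2ℓ, (N * p) ^ v)`, which is `O(n ^ (2ℓε - 1))` for `N = a * n` and `p = n ^ (ε - 1)`.
-/

namespace OrientedGraph

variable {V W : Type}

/-- The blow-up of `G` along `f : W → V`: every vertex `v` is replaced by the independent set
`f ⁻¹' {v}`. The host graph `D₀` of the random model is `D.comap Prod.fst`. -/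
def comap (G : OrientedGraph V) (f : W → V) : OrientedGraph W where
  Adj x y := G.Adj (f x) (f y)
  irrefl x := G.irrefl (f x)
  asymm x y := G.asymm (f x) (f y)

/-- The spanning subgraph of `G` formed by the arcs selected by `ω`; a random `ω` turns it into
bond percolation on `G`. -/
def selectArcs (G : OrientedGraph V) (ω : V × V → Bool) : OrientedGraph V where
  Adj x y := G.Adj x y ∧ ω (x, y) = true
  irrefl x h := G.irrefl x h.1
  asymm x y h h' := G.asymm x y h.1 h'.1

end OrientedGraph

lemma dhat_eq_selectArcs_comap {a n : ℕ} (D : OrientedGraph (Fin a)) (ω : Omega a n) :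
    Dhat D n ω = (D.comap Prod.fst).selectArcs ω :=
  rfl

section Cycles

variable {V : Type} {G : OrientedGraph V} {m m' ℓ : ℕ} {S T : Set (V × V)}

namespace IsCycleArcSet

lemma image_snd (hS : IsCycleArcSet G m S) : Prod.snd '' S = Prod.fst '' S := by
  obtain ⟨c, -, -, rfl⟩ := hS
  simp only [← Set.range_comp]
  exact (Equiv.addRight (1 : ZMod m)).surjective.range_comp c

lemma onArcSet_iff (hS : IsCycleArcSet G m S) {x : V} : OnArcSet S x ↔ x ∈ Prod.fst '' S := by
  have himage : x ∈ Prod.snd '' S ↔ x ∈ Prod.fst '' S := by rw [hS.image_snd]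
  simp only [Set.mem_image, Prod.exists, exists_and_right, exists_eq_right] at himage ⊢
  rw [OnArcSet, exists_or, himage, or_self]

lemma ncard_image_fst (hS : IsCycleArcSet G m S) : (Prod.fst '' S).ncard = m := by
  obtain ⟨c, hc, -, rfl⟩ := hS
  rw [← Set.range_comp]
  exact (Set.ncard_range_of_injective hc).trans (Nat.card_zmod m)

lemma image_fst_subset_of_closed [NeZero m] (hS : IsCycleArcSet G m S) {U : Set V}
    (hne : (Prod.fst '' S ∩ U).Nonempty) (hU : ∀ e ∈ S, e.1 ∈ U → e.2 ∈ U) :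
    Prod.fst '' S ⊆ U := by
  obtain ⟨c, -, -, rfl⟩ := hS
  obtain ⟨_, ⟨_, ⟨i, rfl⟩, rfl⟩, hi⟩ := hne
  have hmem (k : ℕ) : c (i + k) ∈ U := by
    induction k with
    | zero => simpa using hi
    | succ k ih =>
      rw [Nat.cast_succ, ← add_assoc]
      exact hU _ ⟨i + k, rfl⟩ ih
  rintro _ ⟨_, ⟨j, rfl⟩, rfl⟩
  simpa using hmem (j - i).val

lemma subset_of_injOn_fst [NeZero m] (hS : IsCycleArcSet G m S) (hT : IsCycleArcSet G m' T)
    (hST : (Prod.fst '' S ∩ Prod.fst '' T).Nonempty) (hinj : Set.InjOn Prod.fst (S ∪ T)) :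
    S ⊆ T := by
  have mem_of_fst_mem {e : V × V} (he : e ∈ S) (heT : e.1 ∈ Prod.fst '' T) : e ∈ T := by
    obtain ⟨e', he', heq⟩ := heT
    rwa [← hinj (.inr he') (.inl he) heq]
  have hsub : Prod.fst '' S ⊆ Prod.fst '' T :=
    hS.image_fst_subset_of_closed hST fun e he heT =>
      hT.image_snd ▸ Set.mem_image_of_mem Prod.snd (mem_of_fst_mem he heT)
  exact fun e he => mem_of_fst_mem he (hsub ⟨e, he, rfl⟩)

end IsCycleArcSet

namespace IsShortCycleArcSet

lemma onArcSet_iff (hS : IsShortCycleArcSet G ℓ S) {x : V} :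
    OnArcSet S x ↔ x ∈ Prod.fst '' S := by
  obtain ⟨m, -, -, hS⟩ := hS
  exact hS.onArcSet_iff

lemma ncard_image_fst_lt (hS : IsShortCycleArcSet G ℓ S) : (Prod.fst '' S).ncard < ℓ := by
  obtain ⟨m, -, hmℓ, hS⟩ := hS
  rwa [hS.ncard_image_fst]

lemma subset_prod_image_fst (hS : IsShortCycleArcSet G ℓ S) :
    S ⊆ (Prod.fst '' S) ×ˢ (Prod.fst '' S) := by
  obtain ⟨m, -, -, hS⟩ := hS
  exact fun e he => ⟨⟨e, he, rfl⟩, hS.image_snd ▸ ⟨e, he, rfl⟩⟩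

lemma eq_of_injOn_fst (hS : IsShortCycleArcSet G ℓ S) (hT : IsShortCycleArcSet G ℓ T)
    (hST : (Prod.fst '' S ∩ Prod.fst '' T).Nonempty) (hinj : Set.InjOn Prod.fst (S ∪ T)) :
    S = T := by
  obtain ⟨m, hm, -, hS⟩ := hS
  obtain ⟨m', hm', -, hT⟩ := hT
  have : NeZero m := ⟨hm.ne'⟩
  have : NeZero m' := ⟨hm'.ne'⟩
  exact (hS.subset_of_injOn_fst hT hST hinj).antisymm
    (hT.subset_of_injOn_fst hS (Set.inter_comm _ _ ▸ hST) (Set.union_comm _ _ ▸ hinj))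

end IsShortCycleArcSet

lemma isShortCycleArcSet_selectArcs_iff {ω : V × V → Bool} :
    IsShortCycleArcSet (G.selectArcs ω) ℓ S ↔
      IsShortCycleArcSet G ℓ S ∧ ∀ e ∈ S, ω e = true := by
  constructor
  · rintro ⟨m, hm, hmℓ, c, hc, hadj, rfl⟩
    refine ⟨⟨m, hm, hmℓ, c, hc, fun i => (hadj i).1, rfl⟩, ?_⟩
    rintro _ ⟨i, rfl⟩
    exact (hadj i).2
  · rintro ⟨⟨m, hm, hmℓ, c, hc, hadj, rfl⟩, hω⟩
    exact ⟨m, hm, hmℓ, c, hc, fun i => ⟨hadj i, hω _ ⟨i, rfl⟩⟩, rfl⟩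

end Cycles

section Pairs

open Finset

variable {V : Type} [Fintype V] {G : OrientedGraph V} {ℓ : ℕ} {P : Finset (Set (V × V))}

open Classical in
/-- The unordered pairs of distinct directed cycles of length less than `ℓ` in `G` which share a
vertex, as counted by `numIntersectingShortCyclePairs`. -/
noncomputable def intersectingShortCyclePairs (G : OrientedGraph V) (ℓ : ℕ) :
    Finset (Finset (Set (V × V))) :=
  {P | #P = 2 ∧ (∀ S ∈ P, IsShortCycleArcSet G ℓ S) ∧ ∃ x : V, ∀ S ∈ P, OnArcSet S x}

open Classical in
/-- The arcs of the union of a family of arc sets. -/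
noncomputable def unionArcs (P : Finset (Set (V × V))) : Finset (V × V) :=
  {e | ∃ S ∈ P, e ∈ S}

open Classical in
/-- The vertices of the union of a family of cycles, encoded as the tails of its arcs. -/
noncomputable def unionVertices (P : Finset (Set (V × V))) : Finset V :=
  (unionArcs P).image Prod.fst

lemma mem_intersectingShortCyclePairs :
    P ∈ intersectingShortCyclePairs G ℓ ↔
      #P = 2 ∧ (∀ S ∈ P, IsShortCycleArcSet G ℓ S) ∧ ∃ x : V, ∀ S ∈ P, OnArcSet S x := by
  simp [intersectingShortCyclePairs]

lemma numIntersectingShortCyclePairs_eq_card (G : OrientedGraph V) (ℓ : ℕ) :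
    numIntersectingShortCyclePairs G ℓ = #(intersectingShortCyclePairs G ℓ) :=
  Nat.subtype_card _ fun _ => mem_intersectingShortCyclePairs

lemma forall_mem_unionArcs {p : V × V → Prop} :
    (∀ e ∈ unionArcs P, p e) ↔ ∀ S ∈ P, ∀ e ∈ S, p e := by
  simp only [unionArcs, mem_filter, mem_univ, true_and]
  exact ⟨fun h S hS e he => h e ⟨S, hS, he⟩, fun h e ⟨S, hS, he⟩ => h S hS e he⟩

lemma coe_unionArcs (P : Finset (Set (V × V))) : (unionArcs P : Set (V × V)) = ⋃₀ P := by
  ext e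
  simp [unionArcs]

lemma coe_unionVertices (P : Finset (Set (V × V))) :
    (unionVertices P : Set V) = Prod.fst '' ⋃₀ (P : Set (Set (V × V))) := by
  classical
  rw [unionVertices, ← coe_unionArcs]
  exact coe_image

open Classical in
lemma intersectingShortCyclePairs_selectArcs (G : OrientedGraph V) (ℓ : ℕ) (ω : V × V → Bool) :
    intersectingShortCyclePairs (G.selectArcs ω) ℓ =
      {P ∈ intersectingShortCyclePairs G ℓ | ∀ e ∈ unionArcs P, ω e = true} := by
  ext P
  simp only [mem_filter, mem_intersectingShortCyclePairs, isShortCycleArcSet_selectArcs_iff,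
    forall_mem_unionArcs, forall₂_and]
  tauto

lemma card_unionVertices_lt_card_unionArcs (hP : P ∈ intersectingShortCyclePairs G ℓ) :
    #(unionVertices P) < #(unionArcs P) := by
  obtain ⟨hcard, hshort, x, hx⟩ := mem_intersectingShortCyclePairs.1 hP
  classical
  obtain ⟨S, hS, T, hT, hne⟩ := one_lt_card.1 (hcard ▸ one_lt_two)
  refine lt_of_le_of_ne card_image_le fun heq => hne ?_
  have hinj : Set.InjOn Prod.fst (⋃₀ (P : Set (Set (V × V)))) :=
    coe_unionArcs P ▸ card_image_iff.1 heq
  have hshared : (Prod.fst '' S ∩ Prod.fst '' T).Nonempty :=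
    ⟨x, (hshort S hS).onArcSet_iff.1 (hx S hS), (hshort T hT).onArcSet_iff.1 (hx T hT)⟩
  exact (hshort S hS).eq_of_injOn_fst (hshort T hT) hshared <| hinj.mono <|
    Set.union_subset (Set.subset_sUnion_of_mem hS) (Set.subset_sUnion_of_mem hT)

lemma card_unionVertices_lt (hP : P ∈ intersectingShortCyclePairs G ℓ) :
    #(unionVertices P) < 2 * ℓ := by
  obtain ⟨hcard, hshort, -⟩ := mem_intersectingShortCyclePairs.1 hP
  classical
  obtain ⟨S, T, -, rfl⟩ := card_eq_two.1 hcard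
  have hunion : (unionVertices {S, T} : Set V) = Prod.fst '' S ∪ Prod.fst '' T := by
    rw [coe_unionVertices, coe_pair, Set.sUnion_pair, Set.image_union]
  calc #(unionVertices {S, T}) = (Prod.fst '' S ∪ Prod.fst '' T).ncard := by
        rw [← hunion, Set.ncard_coe_finset]
    _ ≤ (Prod.fst '' S).ncard + (Prod.fst '' T).ncard := Set.ncard_union_le _ _
    _ < ℓ + ℓ := add_lt_add (hshort S (by simp)).ncard_image_fst_lt
        (hshort T (by simp)).ncard_image_fst_lt
    _ = 2 * ℓ := (two_mul ℓ).symm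

lemma subset_unionVertices_prod (hP : P ∈ intersectingShortCyclePairs G ℓ) {S : Set (V × V)}
    (hS : S ∈ P) : S ⊆ ↑(unionVertices P ×ˢ unionVertices P) := by
  have hsub : Prod.fst '' S ⊆ unionVertices P := by
    rw [coe_unionVertices]
    exact Set.image_mono (Set.subset_sUnion_of_mem hS)
  rw [coe_product]
  have hshort : IsShortCycleArcSet G ℓ S := (mem_intersectingShortCyclePairs.1 hP).2.1 S hS
  exact hshort.subset_prod_image_fst.trans (Set.prod_mono hsub hsub)

lemma card_filter_unionVertices_eq_le [DecidableEq V] (G : OrientedGraph V) (ℓ : ℕ)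
    (U : Finset V) :
    #{P ∈ intersectingShortCyclePairs G ℓ | unionVertices P = U} ≤ 2 ^ 2 ^ (#U * #U) := by
  classical
  let arcSets : Finset (Set (V × V)) := (U ×ˢ U).powerset.image (↑)
  have hsub : {P ∈ intersectingShortCyclePairs G ℓ | unionVertices P = U} ⊆ arcSets.powerset := by
    intro P hmem
    obtain ⟨hP, rfl⟩ := mem_filter.1 hmem
    refine mem_powerset.2 fun S hS => mem_image.2 ⟨S.toFinset, mem_powerset.2 ?_, S.coe_toFinset⟩
    exact Set.toFinset_subset.2 (subset_unionVertices_prod hP hS)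
  have hcard : #arcSets ≤ 2 ^ (#U * #U) := by
    rw [← card_product, ← card_powerset]
    exact card_image_le
  calc #{P ∈ intersectingShortCyclePairs G ℓ | unionVertices P = U}
      ≤ #arcSets.powerset := card_le_card hsub
    _ = 2 ^ #arcSets := card_powerset arcSets
    _ ≤ 2 ^ 2 ^ (#U * #U) := Nat.pow_le_pow_right Nat.two_pos hcard

lemma card_filter_card_unionVertices_eq_le (G : OrientedGraph V) (ℓ v : ℕ) :
    #{P ∈ intersectingShortCyclePairs G ℓ | #(unionVertices P) = v} ≤
      2 ^ 2 ^ (v * v) * Fintype.card V ^ v := by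
  classical
  calc #{P ∈ intersectingShortCyclePairs G ℓ | #(unionVertices P) = v}
      ≤ 2 ^ 2 ^ (v * v) * #(powersetCard v (univ : Finset V)) := by
        refine card_le_mul_card_image_of_maps_to (f := unionVertices)
          (fun P hP => mem_powersetCard_univ.2 (mem_filter.1 hP).2) _ fun U hU => ?_
        rw [← mem_powersetCard_univ.1 hU]
        refine (card_le_card ?_).trans (card_filter_unionVertices_eq_le G ℓ U)
        exact filter_subset_filter _ (filter_subset _ _)
    _ ≤ 2 ^ 2 ^ (v * v) * Fintype.card V ^ v := by
        rw [card_powersetCard, card_univ]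
        exact Nat.mul_le_mul_left _ (Nat.choose_le_pow _ _)

lemma sum_pow_card_unionArcs_le (G : OrientedGraph V) (ℓ : ℕ) {p : ℝ} (hp0 : 0 ≤ p)
    (hp1 : p ≤ 1) :
    ∑ P ∈ intersectingShortCyclePairs G ℓ, p ^ #(unionArcs P) ≤
      p * ∑ v ∈ range (2 * ℓ), 2 ^ 2 ^ (v * v) * (Fintype.card V * p) ^ v := by
  rw [← sum_fiberwise_of_maps_to fun P hP => mem_range.2 (card_unionVertices_lt hP), mul_sum]
  refine sum_le_sum fun v _ => ?_
  calc ∑ P ∈ intersectingShortCyclePairs G ℓ with #(unionVertices P) = v, p ^ #(unionArcs P)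
      ≤ #{P ∈ intersectingShortCyclePairs G ℓ | #(unionVertices P) = v} • p ^ (v + 1) := by
        refine sum_le_card_nsmul _ _ _ fun P hmem => ?_
        obtain ⟨hP, rfl⟩ := mem_filter.1 hmem
        exact pow_le_pow_of_le_one hp0 hp1 (card_unionVertices_lt_card_unionArcs hP)
    _ ≤ (2 ^ 2 ^ (v * v) * Fintype.card V ^ v) * p ^ (v + 1) := by
        rw [nsmul_eq_mul]
        gcongr
        exact_mod_cast card_filter_card_unionVertices_eq_le G ℓ v
    _ = p * (2 ^ 2 ^ (v * v) * (Fintype.card V * p) ^ v) := by ring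

end Pairs

section Expectation

open Finset

variable {p : ℝ}

lemma isProbabilityMeasure_bernoulliBool (hp0 : 0 ≤ p) (hp1 : p ≤ 1) :
    IsProbabilityMeasure (bernoulliBool p) := by
  constructor
  simp [bernoulliBool, ← ENNReal.ofReal_add hp0 (sub_nonneg.2 hp1)]

lemma measureReal_pi_bernoulliBool_forall_eq_true {ι : Type*} [Fintype ι] (hp0 : 0 ≤ p)
    (hp1 : p ≤ 1) (s : Finset ι) :
    (Measure.pi fun _ : ι => bernoulliBool p).real {ω | ∀ i ∈ s, ω i = true} = p ^ #s := by
  have := isProbabilityMeasure_bernoulliBool hp0 hp1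
  have htrue : bernoulliBool p {true} = ENNReal.ofReal p := by simp [bernoulliBool]
  have hpi : {ω : ι → Bool | ∀ i ∈ s, ω i = true} = Set.pi s fun _ => {true} := rfl
  rw [measureReal_def, ← Measure.infinitePi_eq_pi, hpi,
    Measure.infinitePi_pi _ fun _ _ => .singleton true, prod_const, htrue, ENNReal.toReal_pow,
    ENNReal.toReal_ofReal hp0]

variable {V : Type} [Fintype V]

lemma integral_numIntersectingShortCyclePairs_selectArcs (G : OrientedGraph V) (ℓ : ℕ)
    (hp0 : 0 ≤ p) (hp1 : p ≤ 1) :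
    ∫ ω, (numIntersectingShortCyclePairs (G.selectArcs ω) ℓ : ℝ)
        ∂(Measure.pi fun _ : V × V => bernoulliBool p) =
      ∑ P ∈ intersectingShortCyclePairs G ℓ, p ^ #(unionArcs P) := by
  have := isProbabilityMeasure_bernoulliBool hp0 hp1
  have hcount (ω : V × V → Bool) :
      (numIntersectingShortCyclePairs (G.selectArcs ω) ℓ : ℝ) =
        ∑ P ∈ intersectingShortCyclePairs G ℓ,
          Set.indicator {ω | ∀ e ∈ unionArcs P, ω e = true} 1 ω := by
    classical
    simp only [numIntersectingShortCyclePairs_eq_card, intersectingShortCyclePairs_selectArcs,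
      Set.indicator_apply, Set.mem_ofPred_eq, Pi.one_apply, sum_boole]
  simp_rw [hcount]
  rw [integral_finsetSum _ fun _ _ => .of_finite]
  refine sum_congr rfl fun P _ => ?_
  rw [integral_indicator_one (Set.toFinite _).measurableSet,
    measureReal_pi_bernoulliBool_forall_eq_true hp0 hp1]

lemma integral_numIntersectingShortCyclePairs_selectArcs_le (G : OrientedGraph V) (ℓ : ℕ)
    (hp0 : 0 ≤ p) (hp1 : p ≤ 1) :
    ∫ ω, (numIntersectingShortCyclePairs (G.selectArcs ω) ℓ : ℝ)
        ∂(Measure.pi fun _ : V × V => bernoulliBool p) ≤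
      p * ∑ v ∈ range (2 * ℓ), 2 ^ 2 ^ (v * v) * (Fintype.card V * p) ^ v :=
  (integral_numIntersectingShortCyclePairs_selectArcs G ℓ hp0 hp1).trans_le
    (sum_pow_card_unionArcs_le G ℓ hp0 hp1)

end Expectation

section Asymptotics

open Filter

lemma rpow_sub_one_mul_pow_le {x ε : ℝ} (hx : 1 ≤ x) (hε : 0 ≤ ε) {b : ℝ} (hb : 0 ≤ b)
    {v m : ℕ} (hvm : v < m) :
    x ^ (ε - 1) * (b * x * x ^ (ε - 1)) ^ v ≤ b ^ v * x ^ (m * ε - 1) := by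
  have hx0 : 0 < x := one_pos.trans_le hx
  have hexp : (ε - 1) + ε * v ≤ m * ε - 1 := by
    have hvm' : (v : ℝ) + 1 ≤ m := by exact_mod_cast hvm
    nlinarith
  calc x ^ (ε - 1) * (b * x * x ^ (ε - 1)) ^ v
      = b ^ v * (x ^ (ε - 1) * (x * x ^ (ε - 1)) ^ v) := by ring
    _ = b ^ v * x ^ ((ε - 1) + ε * v) := by
        rw [mul_comm x, ← Real.rpow_add_one hx0.ne', sub_add_cancel, Real.rpow_add hx0,
          Real.rpow_mul_natCast hx0.le]
    _ ≤ b ^ v * x ^ (m * ε - 1) := by gcongr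

lemma exists_integral_numIntersectingShortCyclePairs_le_rpow {a : ℕ}
    (D : OrientedGraph (Fin a)) (ℓ : ℕ) {ε : ℝ} (hε0 : 0 ≤ ε) (hε1 : ε ≤ 1) :
    ∃ C : ℝ, ∀ n : ℕ, 1 ≤ n →
      ∫ ω, (numIntersectingShortCyclePairs (Dhat D n ω) ℓ : ℝ)
          ∂(model a n ((n : ℝ) ^ (ε - 1))) ≤
        C * (n : ℝ) ^ (2 * ℓ * ε - 1) := by
  refine ⟨∑ v ∈ Finset.range (2 * ℓ), 2 ^ 2 ^ (v * v) * (a : ℝ) ^ v, fun n hn => ?_⟩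
  have hn1 : (1 : ℝ) ≤ n := by exact_mod_cast hn
  have hp0 : 0 ≤ (n : ℝ) ^ (ε - 1) := by positivity
  have hp1 : (n : ℝ) ^ (ε - 1) ≤ 1 := Real.rpow_le_one_of_one_le_of_nonpos hn1 (by linarith)
  simp_rw [dhat_eq_selectArcs_comap, model]
  refine (integral_numIntersectingShortCyclePairs_selectArcs_le _ ℓ hp0 hp1).trans ?_
  rw [Finset.mul_sum, Finset.sum_mul]
  refine Finset.sum_le_sum fun v hv => ?_
  have hterm := rpow_sub_one_mul_pow_le hn1 hε0 a.cast_nonneg (Finset.mem_range.1 hv)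
  rw [mul_left_comm, mul_assoc, Fintype.card_prod, Fintype.card_fin, Fintype.card_fin,
    Nat.cast_mul]
  exact mul_le_mul_of_nonneg_left (by exact_mod_cast hterm) (by positivity)

lemma eventually_const_mul_rpow_le_rpow (C : ℝ) {r s : ℝ} (hrs : r < s) :
    ∀ᶠ x : ℝ in atTop, C * x ^ r ≤ x ^ s := by
  have hlim : Tendsto (fun x : ℝ => C * x ^ (-(s - r))) atTop (nhds 0) := by
    simpa using (tendsto_rpow_neg_atTop (sub_pos.2 hrs)).const_mul C
  filter_upwards [hlim.eventually_le_const one_pos, eventually_gt_atTop 0] with x hx hx0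
  calc C * x ^ r = C * x ^ (-(s - r)) * x ^ s := by
        rw [mul_assoc, ← Real.rpow_add hx0]
        ring_nf
    _ ≤ x ^ s := mul_le_of_le_one_left (by positivity) hx

end Asymptotics

theorem expected_intersecting_short_cycle_pairs_general (a : ℕ) (D : OrientedGraph (Fin a))
    (ℓ : ℕ) (ε β : ℝ) (hε0 : 0 ≤ ε) (hε1 : ε ≤ 1) (hβ : β < 1 - 2 * ℓ * ε) :
    ∃ N : ℕ, ∀ n : ℕ, N ≤ n →
      (∫ ω, (numIntersectingShortCyclePairs (Dhat D n ω) ℓ : ℝ)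
          ∂ (model a n ((n : ℝ) ^ (ε - 1)))) ≤
        (n : ℝ) ^ (-β) := by
  obtain ⟨C, hC⟩ := exists_integral_numIntersectingShortCyclePairs_le_rpow D ℓ hε0 hε1
  have hdecay : ∀ᶠ n : ℕ in Filter.atTop, C * (n : ℝ) ^ (2 * ℓ * ε - 1) ≤ (n : ℝ) ^ (-β) :=
    tendsto_natCast_atTop_atTop.eventually
      (eventually_const_mul_rpow_le_rpow C (by linarith : 2 * ℓ * ε - 1 < -β))
  refine Filter.eventually_atTop.1 ?_
  filter_upwards [hdecay, Filter.eventually_ge_atTop 1] with n hn hn1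
  exact (hC n hn1).trans hn

/-- **Lemma 5(ii).** With `0 < ε < 1/(4ℓ)` and `p = n^(ε−1)`, for all sufficiently large
`n` the expected number of pairs of directed cycles of length less than `ℓ` in a random
oriented graph drawn from `𝒟(n, p)` which intersect in at least one vertex is at most
`n^(−1/2)`. -/
theorem expected_intersecting_short_cycle_pairs (a : ℕ) (D : OrientedGraph (Fin a))
    (k ℓ : ℕ) (hk : 0 < k) (hℓ : 0 < ℓ) (ε : ℝ) (hε0 : 0 < ε) (hε : ε < 1 / (4 * ℓ)) :
    ∃ N : ℕ, ∀ n : ℕ, N ≤ n →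
      (∫ ω, (numIntersectingShortCyclePairs (Dhat D n ω) ℓ : ℝ)
          ∂ (model a n ((n : ℝ) ^ (ε - 1)))) ≤
        (n : ℝ) ^ (-(1 : ℝ) / 2) := by
  have hεℓ : ε * (4 * ℓ) < 1 := (lt_div_iff₀ (by positivity)).1 hε
  have hε1 : ε ≤ 1 := by nlinarith [show (1 : ℝ) ≤ ℓ by exact_mod_cast hℓ]
  rw [neg_div]
  exact expected_intersecting_short_cycle_pairs_general a D ℓ ε (1 / 2) hε0.le hε1 (by linarith)
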